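/- Let m ≥ 2. Then every eigenvalue of every matrix in S(P_{3m−2} ∨ K₂) has multiplicity at most 3, and q(P_{3m−2} ∨ K₂) = m. -/

import Mathlib

open Matrix Filter

/-- `A ∈ S(G)`: real symmetric matrix whose off-diagonal zero pattern is given by `G`. -/
def inS {V : Type*} (G : SimpleGraph V) (A : Matrix V V ℝ) : Prop :=
  A.IsSymm ∧ ∀ i j : V, i ≠ j → (A i j ≠ 0 ↔ G.Adj i j)

/-- The spectrum of a matrix, as the multiset of roots of its characteristic polynomial. -/
noncomputable def specMultiset {V : Type*} [Fintype V] [DecidableEq V]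
    (A : Matrix V V ℝ) : Multiset ℝ :=
  A.charpoly.roots

/-- The number of distinct eigenvalues of a matrix. -/
noncomputable def qMat {V : Type*} [Fintype V] [DecidableEq V] (A : Matrix V V ℝ) : ℕ :=
  (specMultiset A).toFinset.card

/-- `q(G)`: the minimum number of distinct eigenvalues over matrices in `S(G)`. -/
noncomputable def qGraph {V : Type*} [Fintype V] [DecidableEq V] (G : SimpleGraph V) : ℕ :=
  sInf {q | ∃ A : Matrix V V ℝ, inS G A ∧ qMat A = q}

/-- The strong spectral property. -/
def HasSSP {V : Type*} [Fintype V] [DecidableEq V] (A : Matrix V V ℝ) : Prop :=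
  ∀ X : Matrix V V ℝ, X.IsSymm → A * X = X * A →
    Matrix.hadamard A X = 0 → Matrix.hadamard (1 : Matrix V V ℝ) X = 0 → X = 0

/-- Generic realisability of a multiset of eigenvalues for a graph. -/
def GenericallyRealisable {V : Type*} [Fintype V] [DecidableEq V]
    (G : SimpleGraph V) (σ : Multiset ℝ) : Prop :=
  ∀ Y : Finset (V → ℝ), (∀ y ∈ Y, y ≠ 0) →
    ∃ (d : V → ℝ) (U : Matrix V V ℝ),
      Multiset.map d Finset.univ.val = σ ∧ Uᵀ * U = 1 ∧
      inS G (U * Matrix.diagonal d * Uᵀ) ∧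
      ∀ y ∈ Y, ∀ i, U.mulVec y i ≠ 0

/-- The partial join `(G₁, X) ∨ G₂`: the disjoint union of `G₁` and `G₂` together with all
edges joining vertices of `X ⊆ V(G₁)` to vertices of `G₂`. -/
def partialJoin {α β : Type*} (G₁ : SimpleGraph α) (X : Set α) (G₂ : SimpleGraph β) :
    SimpleGraph (α ⊕ β) where
  Adj x y :=
    (∃ a b, G₁.Adj a b ∧ x = Sum.inl a ∧ y = Sum.inl b) ∨
    (∃ a b, G₂.Adj a b ∧ x = Sum.inr a ∧ y = Sum.inr b) ∨
    (∃ a ∈ X, ∃ b, x = Sum.inl a ∧ y = Sum.inr b) ∨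
    (∃ a ∈ X, ∃ b, x = Sum.inr b ∧ y = Sum.inl a)
  symm := by
    refine ⟨?_⟩
    rintro x y (⟨a, b, hab, rfl, rfl⟩ | ⟨a, b, hab, rfl, rfl⟩ | ⟨a, ha, b, rfl, rfl⟩ |
      ⟨a, ha, b, rfl, rfl⟩)
    · exact Or.inl ⟨b, a, hab.symm, rfl, rfl⟩
    · exact Or.inr (Or.inl ⟨b, a, hab.symm, rfl, rfl⟩)
    · exact Or.inr (Or.inr (Or.inr ⟨a, ha, b, rfl, rfl⟩))
    · exact Or.inr (Or.inr (Or.inl ⟨a, ha, b, rfl, rfl⟩))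
  loopless := by
    refine ⟨?_⟩
    rintro x (⟨a, b, hab, rfl, h⟩ | ⟨a, b, hab, rfl, h⟩ | ⟨a, ha, b, rfl, h⟩ | ⟨a, ha, b, rfl, h⟩)
    · cases h; exact hab.ne rfl
    · cases h; exact hab.ne rfl
    · exact (Sum.inl_ne_inr h).elim
    · exact (Sum.inr_ne_inl h).elim

/-- The join `G₁ ∨ G₂` of two graphs. -/
def graphJoin {α β : Type*} (G₁ : SimpleGraph α) (G₂ : SimpleGraph β) : SimpleGraph (α ⊕ β) :=
  partialJoin G₁ Set.univ G₂

/-- The disjoint union of a family of graphs. -/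
def sigmaGraph {ι : Type*} {α : ι → Type*} (G : ∀ i, SimpleGraph (α i)) :
    SimpleGraph (Σ i, α i) where
  Adj x y := ∃ (i : ι) (a b : α i), (G i).Adj a b ∧ x = ⟨i, a⟩ ∧ y = ⟨i, b⟩
  symm := by
    refine ⟨?_⟩
    rintro x y ⟨i, a, b, hab, rfl, rfl⟩
    exact ⟨i, b, a, hab.symm, rfl, rfl⟩
  loopless := by
    refine ⟨?_⟩
    rintro x ⟨i, a, b, hab, rfl, h⟩
    obtain rfl : a = b := by simpa using h
    exact hab.ne rfl

/-!
Reading off one row at a time, an eigenvector of a matrix in `S(P_N ∨ H)` that vanishes on `H` and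
at the first vertex of the path vanishes along the whole path. Hence multiplicities are at most
`|H| + 1`, and a matrix on the `3 m` vertices of `P_{3m-2} ∨ K₂` has at least `m` distinct
eigenvalues.

For the converse, fix `λ = (0, 3, …, 3(m-1))` and two disjoint sequences `θ₀`, `θ₁` strictly
interlacing it. Bordering `diagonal θ_s` by one suitable row and column gives spectrum `λ`, for each
`s`; together with `diagonal λ` this is a matrix of order `3 m` in which every eigenvalue is one of
the `m` entries of `λ`, and its part `D = diagonal (λ, θ₀, θ₁)` has distinct entries. An orthogonal
change of basis of the two border vertices makes their `2 × 2` block nondiagonal, and conjugating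
`D` by the orthogonal matrix of orthogonal polynomials for a measure `∑ⱼ (c j)² δ_{t j}` on its
spectrum `t` produces a matrix of the path. For generic weights `c` this orthogonal matrix maps the
two border columns to vectors without zero entries: each entry being zero is the vanishing of a
polynomial in `c`, which is not the zero polynomial.
-/

section OrthogonalPolynomials

open Polynomial InnerProductSpace

/-- The vector `(c j * p (t j))ⱼ`, so that `⟪weightedEval t c p, weightedEval t c r⟫` is the
inner product of the polynomials `p` and `r` in `L²` of the measure `∑ⱼ (c j)² δ_{t j}`. -/
noncomputable def weightedEval {ι : Type*} (t c : ι → ℝ) : ℝ[X] →ₗ[ℝ] EuclideanSpace ℝ ι where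
  toFun p := WithLp.toLp 2 fun j => c j * p.eval (t j)
  map_add' p r := by ext j; simp [mul_add]
  map_smul' x p := by ext j; simp [mul_left_comm]

variable {ι : Type*} {N : ℕ} {t c : ι → ℝ}

lemma weightedEval_apply (p : ℝ[X]) (j : ι) : weightedEval t c p j = c j * p.eval (t j) := rfl

variable [Fintype ι]

lemma linearIndependent_weightedEval_X_pow (ht : Function.Injective t) (hc : ∀ j, c j ≠ 0)
    (hN : Fintype.card ι = N) :
    LinearIndependent ℝ fun a : Fin N => weightedEval t c (X ^ (a : ℕ)) := by
  rw [Fintype.linearIndependent_iff]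
  intro x hx
  refine congrFun (eq_zero_of_forall_index_sum_mul_pow_eq_zero
    (f := t ∘ (Fintype.equivFinOfCardEq hN).symm) (ht.comp (Equiv.injective _)) fun a => ?_)
  have h := congrArg (fun v : EuclideanSpace ℝ ι => v ((Fintype.equivFinOfCardEq hN).symm a)) hx
  simp only [← map_smul, ← map_sum, weightedEval_apply, eval_finsetSum, eval_smul, eval_pow,
    eval_X, smul_eq_mul, PiLp.zero_apply] at h
  exact (mul_eq_zero.mp h).resolve_left (hc _)

lemma exists_weightedEval_eq_gramSchmidtNormed (a : Fin N) :
    ∃ q : ℝ[X], q.degree < (a + 1 : ℕ) ∧ weightedEval t c q =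
      gramSchmidtNormed ℝ (fun b : Fin N => weightedEval t c (X ^ (b : ℕ))) a := by
  set f : Fin N → EuclideanSpace ℝ ι := fun b => weightedEval t c (X ^ (b : ℕ))
  have hspan : gramSchmidtNormed ℝ f a ∈ Submodule.span ℝ (f '' Set.Iic a) := by
    rw [← span_gramSchmidt_Iic ℝ, ← span_gramSchmidtNormed]
    exact Submodule.subset_span ⟨a, Set.self_mem_Iic, rfl⟩
  have hle : Submodule.span ℝ (f '' Set.Iic a) ≤
      (degreeLT ℝ (a + 1)).map (weightedEval t c) := by
    rw [Submodule.span_le]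
    rintro _ ⟨b, hb, rfl⟩
    refine ⟨X ^ (b : ℕ), mem_degreeLT.mpr ?_, rfl⟩
    rw [degree_X_pow]
    exact_mod_cast Nat.lt_succ_of_le hb
  obtain ⟨q, hqdeg, hqeval⟩ := hle hspan
  exact ⟨q, mem_degreeLT.mp hqdeg, hqeval⟩

/-- `w` is the orthonormal basis formed by the values of orthonormal polynomials `q 0, q 1, …`
for the measure `∑ⱼ (c j)² δ_{t j}`, with `q a` of degree `a`. -/
structure IsOrthogonalPolynomialBasis (t c : ι → ℝ)
    (w : OrthonormalBasis (Fin N) ℝ (EuclideanSpace ℝ ι)) (q : Fin N → ℝ[X]) : Prop where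
  eq_weightedEval (a : Fin N) : w a = weightedEval t c (q a)
  degree_lt (a : Fin N) : (q a).degree < (a + 1 : ℕ)
  inner_eq_zero (a : Fin N) (p : ℝ[X]) : p.degree < (a : ℕ) →
    inner ℝ (w a) (weightedEval t c p) = 0

theorem exists_isOrthogonalPolynomialBasis (ht : Function.Injective t) (hc : ∀ j, c j ≠ 0)
    (hN : Fintype.card ι = N) :
    ∃ (w : OrthonormalBasis (Fin N) ℝ (EuclideanSpace ℝ ι)) (q : Fin N → ℝ[X]),
      IsOrthogonalPolynomialBasis t c w q := by
  let f : Fin N → EuclideanSpace ℝ ι := fun a => weightedEval t c (X ^ (a : ℕ))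
  have hli : LinearIndependent ℝ f := linearIndependent_weightedEval_X_pow ht hc hN
  have hdim : Module.finrank ℝ (EuclideanSpace ℝ ι) = Fintype.card (Fin N) := by simp [hN]
  have hq (a : Fin N) : ∃ q : ℝ[X], q.degree < (a + 1 : ℕ) ∧
      weightedEval t c q = gramSchmidtOrthonormalBasis hdim f a := by
    have hnormed : gramSchmidtNormed ℝ f a ≠ 0 := by
      simp [← norm_ne_zero_iff, gramSchmidtNormed_unit_length a hli]
    obtain ⟨q, hqdeg, hqeval⟩ := exists_weightedEval_eq_gramSchmidtNormed (t := t) (c := c) a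
    exact ⟨q, hqdeg, hqeval.trans (gramSchmidtOrthonormalBasis_apply hdim hnormed).symm⟩
  choose q hqdeg hqeval using hq
  refine ⟨_, q, fun a => (hqeval a).symm, hqdeg, fun a p hp => ?_⟩
  have hle : degreeLT ℝ a ≤ LinearMap.ker
      ((innerₗ _ (gramSchmidtOrthonormalBasis hdim f a)).comp (weightedEval t c)) := by
    rw [degreeLT_eq_span_X_pow, Submodule.span_le]
    intro r hr
    obtain ⟨b, hb, rfl⟩ := Finset.mem_image.mp (Finset.mem_coe.mp hr)
    have hba : b < a := Finset.mem_range.mp hb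
    exact gramSchmidtOrthonormalBasis_inv_triangular hdim f (i := ⟨b, hba.trans a.2⟩) hba
  exact hle (mem_degreeLT.mpr hp)

namespace IsOrthogonalPolynomialBasis

variable {w : OrthonormalBasis (Fin N) ℝ (EuclideanSpace ℝ ι)} {q : Fin N → ℝ[X]}

lemma degree_eq (h : IsOrthogonalPolynomialBasis t c w q) (a : Fin N) : (q a).degree = (a : ℕ) := by
  refine le_antisymm (Order.le_of_lt_succ (h.degree_lt a)) (not_lt.mp fun hlt => ?_)
  have hzero := h.inner_eq_zero a (q a) hlt
  rw [← h.eq_weightedEval, real_inner_self_eq_norm_sq, w.norm_eq_one] at hzero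
  norm_num at hzero

lemma inner_ne_zero (h : IsOrthogonalPolynomialBasis t c w q) (a : Fin N) {p : ℝ[X]}
    (hp : p.degree = (a : ℕ)) : inner ℝ (w a) (weightedEval t c p) ≠ 0 := by
  intro hzero
  set r : ℝ[X] := C (q a).leadingCoeff * p - C p.leadingCoeff * q a with hr
  have hp0 : p ≠ 0 := ne_zero_of_degree_gt ((bot_lt_iff_ne_bot.mpr (by simp [hp])) : ⊥ < p.degree)
  have hq0 : q a ≠ 0 :=
    ne_zero_of_degree_gt ((bot_lt_iff_ne_bot.mpr (by simp [h.degree_eq])) : ⊥ < (q a).degree)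
  have hrdeg : r.degree < (a : ℕ) := by
    have hdeg : (C (q a).leadingCoeff * p).degree = (a : ℕ) := by
      rw [degree_C_mul (leadingCoeff_ne_zero.mpr hq0), hp]
    rw [← hdeg]
    refine degree_sub_lt_left ?_ (mul_ne_zero (by simpa using hq0) hp0) ?_
    · rw [hdeg, degree_C_mul (leadingCoeff_ne_zero.mpr hp0), h.degree_eq]
    · simp [mul_comm]
  have hinner := h.inner_eq_zero a r hrdeg
  rw [hr, ← smul_eq_C_mul, ← smul_eq_C_mul, map_sub, map_smul, map_smul, ← h.eq_weightedEval,
    inner_sub_right, inner_smul_right, inner_smul_right, hzero, real_inner_self_eq_norm_sq,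
    w.norm_eq_one] at hinner
  simp [hp0] at hinner

lemma inner_weightedEval_X_mul (h : IsOrthogonalPolynomialBasis t c w q) (a b : Fin N) :
    inner ℝ (w a) (weightedEval t c (X * q b)) = ∑ j, w a j * t j * w b j := by
  simp only [PiLp.inner_apply, RCLike.inner_apply, conj_trivial, weightedEval_apply, eval_mul,
    eval_X, h.eq_weightedEval b]
  exact Finset.sum_congr rfl fun j _ => by ring

lemma sum_mul_mul_eq_zero (h : IsOrthogonalPolynomialBasis t c w q) {a b : Fin N}
    (hab : (b : ℕ) + 1 < a) : ∑ j, w a j * t j * w b j = 0 := by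
  rw [← h.inner_weightedEval_X_mul]
  refine h.inner_eq_zero a _ ?_
  rw [degree_mul, degree_X, h.degree_eq, add_comm]
  exact_mod_cast hab

lemma sum_mul_mul_ne_zero (h : IsOrthogonalPolynomialBasis t c w q) {a b : Fin N}
    (hab : (b : ℕ) + 1 = a) : ∑ j, w a j * t j * w b j ≠ 0 := by
  rw [← h.inner_weightedEval_X_mul]
  refine h.inner_ne_zero a ?_
  rw [degree_mul, degree_X, h.degree_eq, add_comm]
  exact_mod_cast hab

theorem inS_pathGraph [DecidableEq ι] (h : IsOrthogonalPolynomialBasis t c w q) :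
    inS (SimpleGraph.pathGraph N)
      ((of fun j a => w a j)ᵀ * diagonal t * of fun j a => w a j) := by
  have hentry (a b : Fin N) : ((of fun j a => w a j)ᵀ * diagonal t * of fun j a => w a j) a b =
      ∑ j, w a j * t j * w b j := by
    rw [mul_apply]
    simp [mul_diagonal]
  have hsymm (a b : Fin N) : ∑ j, w a j * t j * w b j = ∑ j, w b j * t j * w a j :=
    Finset.sum_congr rfl fun j _ => by ring
  refine ⟨IsSymm.ext fun a b => by rw [hentry, hentry, hsymm], fun a b hne => ?_⟩
  rw [hentry, SimpleGraph.pathGraph_adj]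
  have hval : (a : ℕ) ≠ b := Fin.val_ne_of_ne hne
  refine ⟨fun hab => ?_, ?_⟩
  · by_contra! hadj
    rcases lt_or_gt_of_ne hval with hlt | hlt
    · exact hab (by rw [hsymm]; exact h.sum_mul_mul_eq_zero (by omega))
    · exact hab (h.sum_mul_mul_eq_zero (by omega))
  · rintro (hab | hab)
    · rw [hsymm]; exact h.sum_mul_mul_ne_zero hab
    · exact h.sum_mul_mul_ne_zero hab

end IsOrthogonalPolynomialBasis

end OrthogonalPolynomials

section KrylovGram

open Polynomial

/-- The Gram matrix of `K⁰c, …, Kⁿ⁻¹c, β` against `K⁰c, …, Kⁿc`, where `K = diagonal t`. Over `ℝ`,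
if it is nonsingular then `β` is not orthogonal to the `n`-th orthogonal polynomial for the measure
`∑ⱼ (c j)² δ_{t j}`; over a polynomial ring, `c` is taken to be the tuple of variables. -/
def krylovGram {R ι : Type*} [CommRing R] [Fintype ι] (t c β : ι → R) (n : ℕ) :
    Matrix (Fin (n + 1)) (Fin (n + 1)) R :=
  of fun a b => ∑ j, (if a = Fin.last n then β j else c j * t j ^ (a : ℕ)) * (c j * t j ^ (b : ℕ))

lemma exists_forall_eq_mul_eval_add_mul {ι : Type*} [DecidableEq ι] {t β : ι → ℝ}
    (ht : Function.Injective t) {S : Finset ι} {i : ι} (hiS : i ∉ S) (hi : β i ≠ 0) :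
    ∃ c : ι → ℝ, (∀ j, c j ≠ 0 ↔ j ∈ insert i S) ∧
      ∀ u : ι → ℝ, ∃ (p : ℝ[X]) (x : ℝ), p.degree < S.card ∧
        ∀ j ∈ insert i S, u j = c j * p.eval (t j) + x * β j := by
  have htS : Set.InjOn t S := ht.injOn
  set e : ℝ := (Lagrange.interpolate S t β).eval (t i) with he
  -- With `c = 1` on `S`, solvability in `(p, x)` at the node `i` only requires `β i ≠ c i * e`.
  obtain ⟨d, hd, hde⟩ : ∃ d : ℝ, d ≠ 0 ∧ β i - d * e ≠ 0 := by
    by_cases hβe : β i = e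
    · exact ⟨2, two_ne_zero, fun h => hi (by linarith)⟩
    · exact ⟨1, one_ne_zero, fun h => hβe (by linarith)⟩
  refine ⟨fun j => if j = i then d else if j ∈ S then 1 else 0, fun j => ?_, fun u => ?_⟩
  · rcases eq_or_ne j i with rfl | hji
    · simp [hd]
    · simp [hji]
  set x : ℝ := (u i - d * (Lagrange.interpolate S t u).eval (t i)) / (β i - d * e)
  refine ⟨Lagrange.interpolate S t (u - x • β), x, Lagrange.degree_interpolate_lt _ htS,
    fun j hj => ?_⟩
  rcases Finset.mem_insert.mp hj with rfl | hjS
  · simp only [if_true, map_sub, map_smul, eval_sub, eval_smul, smul_eq_mul, ← he]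
    linear_combination -(div_mul_cancel₀ (u j - d * (Lagrange.interpolate S t u).eval (t j)) hde)
  · rw [Lagrange.eval_interpolate_at_node _ htS hjS]
    simp [hjS, ne_of_mem_of_not_mem hjS hiS]

variable {ι : Type*} [Fintype ι]

lemma map_krylovGram {R S : Type*} [CommRing R] [CommRing S] (φ : R →+* S) (t c β : ι → R)
    (n : ℕ) : φ.mapMatrix (krylovGram t c β n) = krylovGram (φ ∘ t) (φ ∘ c) (φ ∘ β) n := by
  ext a b
  simp [krylovGram, apply_ite φ]

lemma krylovGram_mulVec_coeff {R : Type*} [CommRing R] (t c β : ι → R) {n : ℕ} {r : R[X]}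
    (hr : r.degree < (n + 1 : ℕ)) (a : Fin (n + 1)) :
    (krylovGram t c β n *ᵥ fun b => r.coeff b) a =
      ∑ j, (if a = Fin.last n then β j else c j * t j ^ (a : ℕ)) * (c j * r.eval (t j)) := by
  have heval (x : R) : r.eval x = ∑ b : Fin (n + 1), r.coeff b * x ^ (b : ℕ) :=
    eval_eq_sum_degreeLTEquiv (mem_degreeLT.mpr hr) x
  simp only [krylovGram, mulVec, dotProduct, of_apply, heval, Finset.sum_mul, Finset.mul_sum]
  rw [Finset.sum_comm]
  exact Finset.sum_congr rfl fun j _ => Finset.sum_congr rfl fun b _ => by ring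

lemma IsOrthogonalPolynomialBasis.inner_ne_zero_of_det_krylovGram_ne_zero {N : ℕ} {t c : ι → ℝ}
    {w : OrthonormalBasis (Fin N) ℝ (EuclideanSpace ℝ ι)} {q : Fin N → ℝ[X]}
    (h : IsOrthogonalPolynomialBasis t c w q) {a : Fin N} {β : ι → ℝ}
    (hdet : (krylovGram t c β a).det ≠ 0) : ∑ j, w a j * β j ≠ 0 := by
  intro hzero
  refine hdet (exists_mulVec_eq_zero_iff.mp ⟨fun b => (q a).coeff b, fun hcoeff => ?_, ?_⟩)
  · have hlead : (q a).coeff a = 0 := by simpa using congrFun hcoeff (Fin.last a)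
    exact coeff_ne_zero_of_eq_degree (h.degree_eq a) hlead
  · ext b
    rw [krylovGram_mulVec_coeff t c β (h.degree_lt a), Pi.zero_apply]
    simp only [← weightedEval_apply, ← h.eq_weightedEval]
    cases b using Fin.lastCases with
    | last => simpa [mul_comm] using hzero
    | cast b =>
      have horth := h.inner_eq_zero a (X ^ (b : ℕ)) (by rw [degree_X_pow]; exact_mod_cast b.2)
      simpa [(Fin.castSucc_lt_last b).ne, PiLp.inner_apply, weightedEval_apply] using horth

lemma exists_forall_sum_mul_eq_zero_imp_eq_zero [DecidableEq ι] {t β : ι → ℝ}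
    (ht : Function.Injective t) {S : Finset ι} {i : ι} (hiS : i ∉ S) (hi : β i ≠ 0) :
    ∃ c : ι → ℝ, (∀ j, c j ≠ 0 ↔ j ∈ insert i S) ∧ ∀ u : ι → ℝ, (∀ j ∉ insert i S, u j = 0) →
      (∀ a < S.card, ∑ j, c j * t j ^ a * u j = 0) → ∑ j, β j * u j = 0 → u = 0 := by
  obtain ⟨c, hc, hsolve⟩ := exists_forall_eq_mul_eval_add_mul ht hiS hi
  refine ⟨c, hc, fun u hu hpow hβu => ?_⟩
  obtain ⟨p, x, hp, hpx⟩ := hsolve u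
  have hpu : ∑ j, c j * p.eval (t j) * u j = 0 := by
    have heval (y : ℝ) : p.eval y = ∑ a : Fin S.card, p.coeff a * y ^ (a : ℕ) :=
      eval_eq_sum_degreeLTEquiv (mem_degreeLT.mpr hp) y
    simp only [heval, Finset.mul_sum, Finset.sum_mul]
    rw [Finset.sum_comm]
    refine Finset.sum_eq_zero fun a _ => ?_
    rw [← mul_zero (p.coeff a), ← hpow a a.2, Finset.mul_sum]
    exact Finset.sum_congr rfl fun j _ => by ring
  have hsq : ∑ j, u j * u j = 0 := calc
    ∑ j, u j * u j = ∑ j, (c j * p.eval (t j) * u j + x * (β j * u j)) := by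
      refine Finset.sum_congr rfl fun j _ => ?_
      by_cases hj : j ∈ insert i S
      · linear_combination u j * hpx j hj
      · simp [hu j hj]
    _ = 0 := by rw [Finset.sum_add_distrib, ← Finset.mul_sum, hpu, hβu, mul_zero, add_zero]
  exact dotProduct_self_eq_zero.mp hsq

/-- With `c` supported on `n + 1` points, the polynomial of degree at most `n` whose coefficients
form a kernel vector must vanish on the support of `c`. -/
theorem exists_det_krylovGram_ne_zero {t β : ι → ℝ} {n : ℕ} (ht : Function.Injective t)
    (hβ : β ≠ 0) (hn : n < Fintype.card ι) : ∃ c : ι → ℝ, (krylovGram t c β n).det ≠ 0 := by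
  classical
  obtain ⟨i, hi⟩ := Function.ne_iff.mp hβ
  obtain ⟨S, hS, rfl⟩ : ∃ S ⊆ Finset.univ.erase i, S.card = n := by
    refine Finset.exists_subset_card_eq ?_
    rw [Finset.card_erase_of_mem (Finset.mem_univ i)]
    exact Nat.le_sub_one_of_lt hn
  have hiS : i ∉ S := fun h => Finset.notMem_erase i _ (hS h)
  obtain ⟨c, hc, hzero⟩ := exists_forall_sum_mul_eq_zero_imp_eq_zero ht hiS hi
  refine ⟨c, fun hdet => ?_⟩
  obtain ⟨y, hy, hker⟩ := exists_mulVec_eq_zero_iff.mpr hdet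
  obtain ⟨⟨r, hr⟩, rfl⟩ := (degreeLTEquiv ℝ (S.card + 1)).surjective y
  rw [mem_degreeLT] at hr
  have hrow (a : Fin (S.card + 1)) : ∑ j,
      (if a = Fin.last _ then β j else c j * t j ^ (a : ℕ)) * (c j * r.eval (t j)) = 0 := by
    rw [← krylovGram_mulVec_coeff t c β hr]
    exact congrFun hker a
  have hu : (fun j => c j * r.eval (t j)) = 0 := by
    refine hzero _ (fun j hj => ?_) (fun a ha => ?_) (by simpa using hrow (Fin.last _))
    · simp [not_ne_iff.mp (mt (hc j).mp hj)]
    · simpa only [if_neg (Fin.castSucc_lt_last (⟨a, ha⟩ : Fin S.card)).ne, Fin.val_castSucc] using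
        hrow (Fin.castSucc ⟨a, ha⟩)
  have hr0 : r = 0 := by
    refine eq_zero_of_degree_lt_of_eval_index_eq_zero (s := insert i S) (v := t) ht.injOn
      (by rwa [Finset.card_insert_of_notMem hiS]) fun j hj => ?_
    exact (mul_eq_zero.mp (congrFun hu j)).resolve_left ((hc j).mpr hj)
  subst hr0
  exact hy (map_zero (degreeLTEquiv ℝ (S.card + 1)))

lemma exists_forall_eval_ne_zero {R σ : Type*} [CommRing R] [IsDomain R] [Infinite R]
    {P : Finset (MvPolynomial σ R)} (hP : ∀ p ∈ P, p ≠ 0) :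
    ∃ c : σ → R, ∀ p ∈ P, MvPolynomial.eval c p ≠ 0 := by
  by_contra! hall
  refine Finset.prod_ne_zero_iff.mpr hP (MvPolynomial.funext fun c => ?_)
  obtain ⟨p, hp, hpc⟩ := hall c
  rw [map_prod, map_zero]
  exact Finset.prod_eq_zero hp hpc

lemma eval_det_krylovGram (t β c : ι → ℝ) (n : ℕ) :
    MvPolynomial.eval c (krylovGram (MvPolynomial.C ∘ t) MvPolynomial.X (MvPolynomial.C ∘ β) n).det
      = (krylovGram t c β n).det := by
  rw [RingHom.map_det, map_krylovGram]
  congr 2 <;> ext j <;> simp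

theorem exists_forall_det_krylovGram_ne_zero {t : ι → ℝ} (ht : Function.Injective t)
    {Y : Finset (ι → ℝ)} (hY : ∀ y ∈ Y, y ≠ 0) :
    ∃ c : ι → ℝ, (∀ j, c j ≠ 0) ∧
      ∀ y ∈ Y, ∀ n < Fintype.card ι, (krylovGram t c y n).det ≠ 0 := by
  classical
  let gramDet (y : ι → ℝ) (n : ℕ) : MvPolynomial ι ℝ :=
    (krylovGram (MvPolynomial.C ∘ t) MvPolynomial.X (MvPolynomial.C ∘ y) n).det
  obtain ⟨c, hc⟩ := exists_forall_eval_ne_zero (P := Finset.univ.image MvPolynomial.X ∪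
    Finset.image₂ gramDet Y (Finset.range (Fintype.card ι))) fun p hp => by
      rcases Finset.mem_union.mp hp with hp | hp
      · obtain ⟨j, -, rfl⟩ := Finset.mem_image.mp hp
        exact MvPolynomial.X_ne_zero j
      · obtain ⟨y, hy, n, hn, rfl⟩ := Finset.mem_image₂.mp hp
        obtain ⟨c, hc⟩ := exists_det_krylovGram_ne_zero ht (hY y hy) (Finset.mem_range.mp hn)
        intro hzero
        apply hc
        rw [← eval_det_krylovGram]
        exact (congrArg _ hzero).trans (map_zero _)
  refine ⟨c, fun j => ?_, fun y hy n hn => ?_⟩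
  · simpa using hc (MvPolynomial.X j) (Finset.mem_union_left _
      (Finset.mem_image_of_mem _ (Finset.mem_univ j)))
  · rw [← eval_det_krylovGram]
    exact hc _ (Finset.mem_union_right _
      (Finset.mem_image₂_of_mem hy (Finset.mem_range.mpr hn)))

end KrylovGram

theorem exists_orthogonal_inS_pathGraph {ι : Type*} [Fintype ι] [DecidableEq ι] {N : ℕ}
    {t : ι → ℝ} (ht : Function.Injective t) (hN : Fintype.card ι = N) {Y : Finset (ι → ℝ)}
    (hY : ∀ y ∈ Y, y ≠ 0) :
    ∃ W : Matrix ι (Fin N) ℝ, W * Wᵀ = 1 ∧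
      inS (SimpleGraph.pathGraph N) (Wᵀ * diagonal t * W) ∧ ∀ y ∈ Y, ∀ a, (Wᵀ *ᵥ y) a ≠ 0 := by
  obtain ⟨c, hc, hdet⟩ := exists_forall_det_krylovGram_ne_zero ht hY
  obtain ⟨w, q, hw⟩ := exists_isOrthogonalPolynomialBasis ht hc hN
  have hortho : (of fun j a => w a j)ᵀ * (of fun j a => w a j) =
      (1 : Matrix (Fin N) (Fin N) ℝ) := by
    ext a b
    rw [one_apply, ← w.inner_eq_ite a b]
    simp [mul_apply, PiLp.inner_apply, mul_comm]
  exact ⟨of fun j a => w a j, (mul_eq_one_comm_of_card_eq _ _ _ (by simp [hN])).mp hortho,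
    hw.inS_pathGraph, fun y hy a =>
      hw.inner_ne_zero_of_det_krylovGram_ne_zero (hdet y hy a (hN ▸ a.2))⟩

section Arrow

open Polynomial Lagrange

lemma degree_sub_lt_of_monic_of_nextCoeff_eq {R : Type*} [CommRing R] {p r : R[X]} {n : ℕ}
    (hp : p.Monic) (hr : r.Monic) (hpn : p.natDegree = n + 1) (hrn : r.natDegree = n + 1)
    (h : p.nextCoeff = r.nextCoeff) : (p - r).degree < n := by
  refine (degree_lt_iff_coeff_zero _ _).mpr fun i hi => ?_
  rcases hi.eq_or_lt with rfl | hni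
  · simpa [nextCoeff_of_natDegree_pos, hpn, hrn, sub_eq_zero] using h
  rcases (Nat.succ_le_of_lt hni).eq_or_lt with rfl | hni'
  · have hpc := hp.coeff_natDegree
    have hrc := hr.coeff_natDegree
    rw [hpn] at hpc
    rw [hrn] at hrc
    rw [coeff_sub, hpc, hrc, sub_self]
  · rw [coeff_sub, coeff_eq_zero_of_natDegree_lt (hpn ▸ hni'),
      coeff_eq_zero_of_natDegree_lt (hrn ▸ hni'), sub_self]

variable {F ι κ : Type*} [Field F] [Fintype ι] [Fintype κ] [DecidableEq ι]

/-- The right-hand side is the characteristic polynomial of `diagonal θ` bordered by a vector `b`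
and a corner entry, once each `b j ^ 2` equals minus the coefficient of the `j`-th summand. -/
lemma nodal_eq_mul_nodal_add_sum {lam : κ → F} {θ : ι → F} (hθ : Function.Injective θ)
    (hcard : Fintype.card κ = Fintype.card ι + 1) :
    nodal Finset.univ lam = (X - C (∑ i, lam i - ∑ j, θ j)) * nodal Finset.univ θ +
      ∑ j, C (nodalWeight Finset.univ θ j * (nodal Finset.univ lam).eval (θ j)) *
        nodal (Finset.univ.erase j) θ := by
  have hmonic : ((X - C (∑ i, lam i - ∑ j, θ j)) * nodal Finset.univ θ).Monic :=
    (monic_X_sub_C _).mul nodal_monic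
  have hdeg : degree (nodal Finset.univ lam -
      (X - C (∑ i, lam i - ∑ j, θ j)) * nodal Finset.univ θ) < (Fintype.card ι : ℕ) := by
    refine degree_sub_lt_of_monic_of_nextCoeff_eq nodal_monic hmonic ?_ ?_ ?_
    · rw [natDegree_nodal, Finset.card_univ, hcard]
    · rw [(monic_X_sub_C _).natDegree_mul nodal_monic, natDegree_X_sub_C, natDegree_nodal,
        Finset.card_univ, add_comm]
    · rw [(monic_X_sub_C _).nextCoeff_mul nodal_monic, nextCoeff_X_sub_C, nodal_eq, nodal_eq,
        prod_X_sub_C_nextCoeff, prod_X_sub_C_nextCoeff]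
      ring
  rw [← sub_eq_iff_eq_add', eq_interpolate_of_eval_eq (s := Finset.univ) (v := θ)
    (fun j => (nodal Finset.univ lam).eval (θ j)) hθ.injOn hdeg fun j hj => by
      simp [eval_nodal_at_node hj], interpolate_apply]
  refine Finset.sum_congr rfl fun j hj => ?_
  rw [basis_eq_prod_sub_inv_mul_nodal_div hj, nodal_erase_eq_nodal_div hj, ← mul_assoc, ← C_mul,
    mul_comm (nodalWeight _ _ _)]

/-- Here `(y, z)` is a `μ`-eigenvector of the bordered matrix
`[[diagonal θ, b], [bᵀ, ∑ lam - ∑ θ]]`. -/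
lemma arrow_eigenvector_eq_zero {lam : κ → F} {θ : ι → F} (hθ : Function.Injective θ)
    (hcard : Fintype.card κ = Fintype.card ι + 1) {b y : ι → F} {z μ : F}
    (hb : ∀ j, b j ^ 2 = -(nodalWeight Finset.univ θ j * (nodal Finset.univ lam).eval (θ j)))
    (hμ : ∀ i, μ ≠ lam i) (hy : ∀ j, θ j * y j + b j * z = μ * y j)
    (hz : ∑ j, b j * y j + (∑ i, lam i - ∑ j, θ j) * z = μ * z) : y = 0 ∧ z = 0 := by
  have hL : (nodal Finset.univ lam).eval μ ≠ 0 := eval_nodal_not_at_node fun i _ => hμ i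
  have hz0 : z = 0 := by
    have hterm (j : ι) : (nodal Finset.univ θ).eval μ * (b j * y j) =
        b j ^ 2 * (nodal (Finset.univ.erase j) θ).eval μ * z := by
      rw [nodal_eq_mul_nodal_erase (Finset.mem_univ j), eval_mul, eval_sub, eval_X, eval_C]
      linear_combination -(nodal (Finset.univ.erase j) θ).eval μ * b j * hy j
    have hsum : (nodal Finset.univ θ).eval μ * ∑ j, b j * y j =
        (∑ j, b j ^ 2 * (nodal (Finset.univ.erase j) θ).eval μ) * z := by
      rw [Finset.mul_sum, Finset.sum_mul]
      exact Finset.sum_congr rfl fun j _ => hterm j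
    have hLz := congrArg (eval μ) (nodal_eq_mul_nodal_add_sum (lam := lam) hθ hcard)
    simp only [eval_add, eval_mul, eval_sub, eval_X, eval_C, eval_finsetSum] at hLz
    simp only [hb, neg_mul, Finset.sum_neg_distrib] at hsum
    refine (mul_eq_zero.mp ?_).resolve_left hL
    linear_combination z * hLz + hsum - (nodal Finset.univ θ).eval μ * hz
  have hy' (j : ι) (hj : μ ≠ θ j) : y j = 0 := by
    have := hy j
    rw [hz0, mul_zero, add_zero] at this
    exact (mul_eq_mul_right_iff.mp this).resolve_left hj.symm
  refine ⟨funext fun k => by_contra fun hk => ?_, hz0⟩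
  obtain rfl : μ = θ k := not_ne_iff.mp (mt (hy' k) hk)
  have hbk : b k ≠ 0 := by
    rw [← pow_ne_zero_iff two_ne_zero, hb, neg_ne_zero]
    exact mul_ne_zero (nodalWeight_ne_zero hθ.injOn (Finset.mem_univ k)) hL
  rw [hz0, mul_zero, mul_zero, add_zero, Fintype.sum_eq_single k fun j hj => by
    rw [hy' j (hθ.ne hj.symm), mul_zero]] at hz
  exact hk ((mul_eq_zero.mp hz).resolve_left hbk)

lemma nodalWeight_mul_eval_nodal_neg {K : Type*} [Field K] [LinearOrder K] [IsStrictOrderedRing K]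
    {n : ℕ} {lam : Fin (n + 1) → K} {θ : Fin n → K}
    (hlt : ∀ j, lam j.castSucc < θ j) (hgt : ∀ j, θ j < lam j.succ) (j : Fin n) :
    nodalWeight Finset.univ θ j * (nodal Finset.univ lam).eval (θ j) < 0 := by
  have hlam : Monotone lam :=
    Fin.monotone_iff_le_succ.mpr fun i => ((hlt i).trans (hgt i)).le
  have hfactor : ∀ i ∈ Finset.univ.erase j,
      0 < (θ j - θ i)⁻¹ * (θ j - lam (j.castSucc.succAbove i)) := by
    intro i hi
    rcases lt_or_gt_of_ne (Finset.ne_of_mem_erase hi) with hij | hij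
    · rw [Fin.succAbove_castSucc_of_lt _ _ hij]
      have hθ : θ i < θ j := (hgt i).trans_le
        ((hlam (Fin.succ_le_castSucc_iff.mpr hij)).trans (hlt j).le)
      exact mul_pos (inv_pos.mpr (sub_pos.mpr hθ)) (sub_pos.mpr ((hlt i).trans hθ))
    · rw [Fin.succAbove_castSucc_of_le _ _ hij.le]
      have hθ : θ j < θ i := (hgt j).trans_le
        ((hlam (Fin.succ_le_castSucc_iff.mpr hij)).trans (hlt i).le)
      exact mul_pos_of_neg_of_neg (inv_lt_zero.mpr (sub_neg.mpr hθ))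
        (sub_neg.mpr (hθ.trans (hgt i)))
  have hsplit : nodalWeight Finset.univ θ j * (nodal Finset.univ lam).eval (θ j) =
      (θ j - lam j.castSucc) * (θ j - lam j.succ) *
        ∏ i ∈ Finset.univ.erase j, (θ j - θ i)⁻¹ * (θ j - lam (j.castSucc.succAbove i)) := by
    rw [nodalWeight, eval_nodal, Fin.prod_univ_succAbove _ j.castSucc,
      ← Finset.mul_prod_erase Finset.univ _ (Finset.mem_univ j), Fin.succAbove_castSucc_self,
      Finset.prod_mul_distrib]
    ring
  rw [hsplit]
  exact mul_neg_of_neg_of_pos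
    (mul_neg_of_pos_of_neg (sub_pos.mpr (hlt j)) (sub_neg.mpr (hgt j))) (Finset.prod_pos hfactor)

end Arrow

section Spectrum

variable {V : Type*} [Fintype V] [DecidableEq V] {A : Matrix V V ℝ}

lemma exists_mulVec_eq_smul_of_mem_specMultiset {μ : ℝ} (hμ : μ ∈ specMultiset A) :
    ∃ x : V → ℝ, x ≠ 0 ∧ A *ᵥ x = μ • x := by
  have hdet : (scalar V μ - A).det = 0 := by
    rw [← eval_charpoly]
    exact Polynomial.isRoot_of_mem_roots hμ
  obtain ⟨x, hx, hAx⟩ := exists_mulVec_eq_zero_iff.mpr hdet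
  refine ⟨x, hx, ?_⟩
  rw [sub_mulVec, sub_eq_zero] at hAx
  simpa using hAx.symm

lemma finrank_eigenspace_eq_count_specMultiset (hA : A.IsSymm) (μ : ℝ) :
    Module.finrank ℝ (Module.End.eigenspace (toEuclideanLin A) μ) =
      Multiset.count μ (specMultiset A) := by
  have hsymm : (toEuclideanLin A).IsSymmetric := isSymmetric_toEuclideanLin_iff.mpr hA
  rw [← hsymm.isFinitelySemisimple.maxGenEigenspace_eq_eigenspace,
    LinearMap.finrank_maxGenEigenspace_eq, specMultiset, Polynomial.count_roots,
    ← LinearMap.charpoly_toMatrix _ (EuclideanSpace.basisFun V ℝ).toBasis,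
    toEuclideanLin_eq_toLin_orthonormal, LinearMap.toMatrix_toLin]

lemma count_specMultiset_le_card {Z : Type*} [Fintype Z] (hA : A.IsSymm) {μ : ℝ} (z : Z → V)
    (hz : ∀ x : V → ℝ, A *ᵥ x = μ • x → (∀ i, x (z i) = 0) → x = 0) :
    Multiset.count μ (specMultiset A) ≤ Fintype.card Z := by
  rw [← finrank_eigenspace_eq_count_specMultiset hA, ← Module.finrank_fintype_fun_eq_card ℝ]
  let ev : EuclideanSpace ℝ V →ₗ[ℝ] Z → ℝ :=
    LinearMap.funLeft ℝ ℝ z ∘ₗ (WithLp.linearEquiv 2 ℝ (V → ℝ)).toLinearMap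
  refine LinearMap.finrank_le_finrank_of_injective (f := ev.domRestrict _) ?_
  rw [← LinearMap.ker_eq_bot, LinearMap.ker_eq_bot']
  rintro ⟨x, hx⟩ hxz
  have h0 := hz x.ofLp (congrArg WithLp.ofLp (Module.End.mem_eigenspace_iff.mp hx)) (congrFun hxz)
  ext i
  exact congrFun h0 i

lemma card_specMultiset (hA : A.IsSymm) : (specMultiset A).card = Fintype.card V := by
  have hH : A.IsHermitian := hA
  rw [specMultiset, hH.roots_charpoly_eq_eigenvalues, Multiset.card_map]
  rfl

lemma card_le_mul_qMat (hA : A.IsSymm) {r : ℕ}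
    (hr : ∀ μ, Multiset.count μ (specMultiset A) ≤ r) : Fintype.card V ≤ r * qMat A := by
  rw [← card_specMultiset hA, ← Multiset.toFinset_sum_count_eq, qMat, mul_comm, ← smul_eq_mul]
  exact Finset.sum_le_card_nsmul _ _ r fun μ _ => hr μ

lemma qMat_le_card {κ : Type*} [Fintype κ] (lam : κ → ℝ)
    (h : ∀ μ ∈ specMultiset A, ∃ i, μ = lam i) : qMat A ≤ Fintype.card κ := by
  have hsub : (specMultiset A).toFinset ⊆ Finset.univ.image lam := fun μ hμ => by
    obtain ⟨i, rfl⟩ := h μ (Multiset.mem_toFinset.mp hμ)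
    exact Finset.mem_image_of_mem _ (Finset.mem_univ i)
  exact (Finset.card_le_card hsub).trans Finset.card_image_le

end Spectrum

section Join

variable {α β : Type*} {G : SimpleGraph α} {H : SimpleGraph β}

lemma graphJoin_adj_inl_inl {a b : α} :
    (graphJoin G H).Adj (Sum.inl a) (Sum.inl b) ↔ G.Adj a b := by
  simp [graphJoin, partialJoin]

lemma graphJoin_adj_inr_inr {a b : β} :
    (graphJoin G H).Adj (Sum.inr a) (Sum.inr b) ↔ H.Adj a b := by
  simp [graphJoin, partialJoin]

lemma graphJoin_adj_inl_inr (a : α) (b : β) : (graphJoin G H).Adj (Sum.inl a) (Sum.inr b) := by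
  simp [graphJoin, partialJoin]

lemma inS_graphJoin_fromBlocks {A : Matrix α α ℝ} {B : Matrix α β ℝ} {C : Matrix β β ℝ}
    (hA : inS G A) (hB : ∀ a b, B a b ≠ 0) (hC : inS H C) :
    inS (graphJoin G H) (fromBlocks A B Bᵀ C) := by
  refine ⟨IsSymm.fromBlocks hA.1 rfl hC.1, ?_⟩
  rintro (a | a) (b | b) hab
  · rw [fromBlocks_apply₁₁, graphJoin_adj_inl_inl, hA.2 a b (ne_of_apply_ne _ hab)]
  · exact iff_of_true (hB a b) (graphJoin_adj_inl_inr a b)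
  · exact iff_of_true (hB b a) (graphJoin_adj_inl_inr b a).symm
  · rw [fromBlocks_apply₂₂, graphJoin_adj_inr_inr, hC.2 a b (ne_of_apply_ne _ hab)]

/-- The colour change rule of zero forcing. -/
lemma apply_eq_zero_of_forall_adj [Fintype α] {A : Matrix α α ℝ} (hA : inS G A) {μ : ℝ} {x : α → ℝ}
    (hx : A *ᵥ x = μ • x) {u v : α} (hu : x u = 0) (huv : G.Adj u v)
    (h : ∀ w, G.Adj u w → w ≠ v → x w = 0) : x v = 0 := by
  have hrow : ∑ w, A u w * x w = A u v * x v := by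
    refine Fintype.sum_eq_single v fun w hwv => ?_
    by_cases hwu : u = w
    · rw [← hwu, hu, mul_zero]
    by_cases hadj : G.Adj u w
    · rw [h w hadj hwv, mul_zero]
    · rw [not_ne_iff.mp (mt (hA.2 u w hwu).mp hadj), zero_mul]
  have hmul : A u v * x v = 0 := by
    rw [← hrow, ← smul_zero μ, ← hu]
    exact congrFun hx u
  exact (mul_eq_zero.mp hmul).resolve_left ((hA.2 u v huv.ne).mpr huv)

theorem count_specMultiset_le_of_inS_graphJoin_pathGraph [Fintype β] [DecidableEq β] {N : ℕ}
    [NeZero N] {A : Matrix (Fin N ⊕ β) (Fin N ⊕ β) ℝ}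
    (hA : inS (graphJoin (SimpleGraph.pathGraph N) H) A) (μ : ℝ) :
    Multiset.count μ (specMultiset A) ≤ Fintype.card β + 1 := by
  rw [← Fintype.card_option]
  refine count_specMultiset_le_card hA.1 (fun o : Option β => o.elim (Sum.inl 0) Sum.inr)
    fun x hx hzero => ?_
  have hright (s : β) : x (Sum.inr s) = 0 := hzero (some s)
  have hleft (i : ℕ) : ∀ hi : i < N, x (Sum.inl ⟨i, hi⟩) = 0 := by
    induction i using Nat.strong_induction_on with
    | _ i ih =>
      intro hi
      rcases i with - | i
      · exact hzero none
      refine apply_eq_zero_of_forall_adj hA hx (ih i i.lt_succ_self (by omega))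
        (graphJoin_adj_inl_inl.mpr (SimpleGraph.pathGraph_adj.mpr (Or.inl rfl))) ?_
      rintro (w | w) hadj hw
      · rw [graphJoin_adj_inl_inl, SimpleGraph.pathGraph_adj] at hadj
        refine ih w ?_ w.2
        have hne : (w : ℕ) ≠ i + 1 := fun h => hw (congrArg Sum.inl (Fin.ext h))
        simp only at hadj
        omega
      · exact hright w
  ext (i | s)
  · exact hleft i i.2
  · exact hright s

lemma charpoly_mul_mul_of_mul_eq_one {R m n : Type*} [CommRing R] [Fintype m] [Fintype n]
    [DecidableEq m] [DecidableEq n] {U : Matrix n m R} {V : Matrix m n R} (hVU : V * U = 1)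
    (hcard : Fintype.card n = Fintype.card m) (M : Matrix m m R) :
    (U * M * V).charpoly = M.charpoly := by
  rw [charpoly_mul_comm_of_le _ _ hcard.ge, ← Matrix.mul_assoc, hVU, Matrix.one_mul, hcard,
    Nat.sub_self, pow_zero, one_mul]

theorem exists_inS_graphJoin_pathGraph_charpoly_eq {ι : Type*} [Fintype ι] [DecidableEq ι]
    [Fintype β] [DecidableEq β] {N : ℕ} {t : ι → ℝ} (ht : Function.Injective t)
    (hN : Fintype.card ι = N) {B : Matrix ι β ℝ} {C Q : Matrix β β ℝ} (hQ : Q * Qᵀ = 1)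
    (hB : ∀ s, (B * Q).col s ≠ 0) (hC : inS H (Qᵀ * C * Q)) :
    ∃ A, inS (graphJoin (SimpleGraph.pathGraph N) H) A ∧
      A.charpoly = (fromBlocks (diagonal t) B Bᵀ C).charpoly := by
  classical
  obtain ⟨W, hWW, hpath, hne⟩ := exists_orthogonal_inS_pathGraph ht hN
    (Y := Finset.univ.image (B * Q).col) (by simpa using hB)
  refine ⟨_, inS_graphJoin_fromBlocks hpath (B := Wᵀ * (B * Q)) (fun a s => ?_) hC, ?_⟩
  · exact hne _ (Finset.mem_image_of_mem _ (Finset.mem_univ s)) a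
  · have hcard : Fintype.card (Fin N ⊕ β) = Fintype.card (ι ⊕ β) := by simp [hN]
    have hV : fromBlocks W 0 0 Q * (fromBlocks W 0 0 Q)ᵀ = 1 := by
      simp [fromBlocks_transpose, fromBlocks_multiply, hWW, hQ]
    rw [← charpoly_mul_mul_of_mul_eq_one hV hcard]
    simp [fromBlocks_transpose, fromBlocks_multiply, Matrix.mul_assoc]

end Join

section Hubs

variable {Λ κ J : Type*} [Fintype κ] [DecidableEq κ]

/-- The border joining the `s`-th hub, with weights `b s j`, to the `s`-th copy of `J` and leaving
`Λ` isolated. -/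
def hubBorder (Λ : Type*) (b : κ → J → ℝ) : Matrix (Λ ⊕ κ × J) κ ℝ :=
  of fun i s => Sum.elim 0 (fun p => if p.1 = s then b s p.2 else 0) i

lemma hubBorder_mul_apply_inr (b : κ → J → ℝ) (Q : Matrix κ κ ℝ) (s : κ) (j : J) (r : κ) :
    (hubBorder Λ b * Q) (Sum.inr (s, j)) r = b s j * Q s r := by
  simp [hubBorder, mul_apply]

lemma hubBorder_mulVec_inl (b : κ → J → ℝ) (z : κ → ℝ) (i : Λ) :
    (hubBorder Λ b *ᵥ z) (Sum.inl i) = 0 := by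
  simp [hubBorder, mulVec, dotProduct]

lemma hubBorder_mulVec_inr (b : κ → J → ℝ) (z : κ → ℝ) (s : κ) (j : J) :
    (hubBorder Λ b *ᵥ z) (Sum.inr (s, j)) = b s j * z s := by
  simp [hubBorder, mulVec, dotProduct]

variable [Fintype Λ] [Fintype J]

lemma hubBorder_transpose_mulVec_apply (b : κ → J → ℝ) (y : Λ ⊕ κ × J → ℝ) (s : κ) :
    ((hubBorder Λ b)ᵀ *ᵥ y) s = ∑ j, b s j * y (Sum.inr (s, j)) := by
  simp [hubBorder, mulVec, dotProduct, Fintype.sum_prod_type]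

lemma exists_eq_of_mem_specMultiset_fromBlocks_hubBorder [DecidableEq Λ] [DecidableEq J]
    {lam : Λ → ℝ} {θ b : κ → J → ℝ}
    (hθ : ∀ s, Function.Injective (θ s)) (hcard : Fintype.card Λ = Fintype.card J + 1)
    (hb : ∀ s j, b s j ^ 2 = -(Lagrange.nodalWeight Finset.univ (θ s) j *
      (Lagrange.nodal Finset.univ lam).eval (θ s j)))
    {μ : ℝ} (hμ : μ ∈ specMultiset (fromBlocks
      (diagonal (Sum.elim lam fun p : κ × J => θ p.1 p.2)) (hubBorder Λ b) (hubBorder Λ b)ᵀ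
      (diagonal fun s => ∑ i, lam i - ∑ j, θ s j))) :
    ∃ i, μ = lam i := by
  obtain ⟨x, hx0, hx⟩ := exists_mulVec_eq_smul_of_mem_specMultiset hμ
  by_contra! hne
  rw [fromBlocks_mulVec] at hx
  have hfree (i : Λ) : x (Sum.inl (Sum.inl i)) = 0 := by
    have hrow := congrFun hx (Sum.inl (Sum.inl i))
    simp only [Sum.elim_inl, Pi.add_apply, mulVec_diagonal, hubBorder_mulVec_inl, add_zero,
      Function.comp_apply, Pi.smul_apply, smul_eq_mul, mul_eq_mul_right_iff] at hrow
    exact hrow.resolve_left (hne i).symm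
  have hspoke (s : κ) (j : J) : θ s j * x (Sum.inl (Sum.inr (s, j))) + b s j * x (Sum.inr s) =
      μ * x (Sum.inl (Sum.inr (s, j))) := by
    have hrow := congrFun hx (Sum.inl (Sum.inr (s, j)))
    simpa [mulVec_diagonal, hubBorder_mulVec_inr] using hrow
  have hhub (s : κ) : ∑ j, b s j * x (Sum.inl (Sum.inr (s, j))) +
      (∑ i, lam i - ∑ j, θ s j) * x (Sum.inr s) = μ * x (Sum.inr s) := by
    have hrow := congrFun hx (Sum.inr s)
    simpa [mulVec_diagonal, hubBorder_transpose_mulVec_apply] using hrow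
  have hzero (s : κ) := arrow_eigenvector_eq_zero (hθ s) hcard (hb s) hne (hspoke s) (hhub s)
  refine hx0 ?_
  ext ((i | ⟨s, j⟩) | s)
  · exact hfree i
  · exact congrFun (hzero s).1 j
  · exact (hzero s).2

end Hubs

theorem exists_inS_graphJoin_pathGraph_forall_mem_specMultiset {κ : Type*} [Fintype κ]
    [DecidableEq κ] {H : SimpleGraph κ} {n N : ℕ} [NeZero n] {lam : Fin (n + 1) → ℝ}
    {θ : κ → Fin n → ℝ} {Q : Matrix κ κ ℝ}
    (hlt : ∀ s j, lam j.castSucc < θ s j) (hgt : ∀ s j, θ s j < lam j.succ)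
    (hinj : Function.Injective (Sum.elim lam fun p : κ × Fin n => θ p.1 p.2))
    (hN : Fintype.card (Fin (n + 1) ⊕ κ × Fin n) = N) (hQ : Q * Qᵀ = 1)
    (hH : inS H (Qᵀ * diagonal (fun s => ∑ i, lam i - ∑ j, θ s j) * Q)) :
    ∃ A, inS (graphJoin (SimpleGraph.pathGraph N) H) A ∧
      ∀ μ ∈ specMultiset A, ∃ i, μ = lam i := by
  have hneg (s : κ) (j : Fin n) := nodalWeight_mul_eval_nodal_neg (hlt s) (hgt s) j
  set b : κ → Fin n → ℝ := fun s j => √(-(Lagrange.nodalWeight Finset.univ (θ s) j *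
    (Lagrange.nodal Finset.univ lam).eval (θ s j)))
  have hcol (r : κ) : (hubBorder (Fin (n + 1)) b * Q).col r ≠ 0 := by
    intro hzero
    have hQr (s : κ) : Q s r = 0 := by
      have hentry := congrFun hzero (Sum.inr (s, 0))
      rw [col_apply, hubBorder_mul_apply_inr, Pi.zero_apply] at hentry
      exact (mul_eq_zero.mp hentry).resolve_left (Real.sqrt_ne_zero'.mpr (neg_pos.mpr (hneg s 0)))
    have hQQ : (Qᵀ * Q) r r = 1 := by rw [mul_eq_one_comm.mp hQ, one_apply_eq]
    simp [mul_apply, hQr] at hQQ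
  obtain ⟨A, hA, hchar⟩ := exists_inS_graphJoin_pathGraph_charpoly_eq hinj hN hQ hcol hH
  refine ⟨A, hA, fun μ hμ => ?_⟩
  rw [specMultiset, hchar] at hμ
  exact exists_eq_of_mem_specMultiset_fromBlocks_hubBorder
    (fun s => (hinj.comp Sum.inr_injective).comp (Prod.mk_right_injective s)) (by simp)
    (fun s j => Real.sq_sqrt (neg_pos.mpr (hneg s j)).le) hμ

lemma exists_orthogonal_inS_top {c : Fin 2 → ℝ} (hc : c 0 ≠ c 1) :
    ∃ Q : Matrix (Fin 2) (Fin 2) ℝ, Q * Qᵀ = 1 ∧ inS ⊤ (Qᵀ * diagonal c * Q) := by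
  let Q : Matrix (Fin 2) (Fin 2) ℝ := !![3 / 5, 4 / 5; 4 / 5, -3 / 5]
  have hQ : Q * Qᵀ = 1 := by
    ext i j
    fin_cases i <;> fin_cases j <;> norm_num [Q, mul_apply, Fin.sum_univ_two]
  have hsymm : (Qᵀ * diagonal c * Q).IsSymm := by simp [IsSymm, Matrix.mul_assoc]
  have hentry : (Qᵀ * diagonal c * Q) 0 1 = 12 / 25 * (c 0 - c 1) := by
    rw [mul_apply]
    simp only [Q, mul_diagonal, transpose_apply, Fin.sum_univ_two, of_apply, cons_val_zero,
      cons_val_one]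
    ring
  have hne : (Qᵀ * diagonal c * Q) 0 1 ≠ 0 := by
    rw [hentry]
    exact mul_ne_zero (by norm_num) (sub_ne_zero_of_ne hc)
  refine ⟨Q, hQ, hsymm, fun i j hij => iff_of_true ?_ hij⟩
  fin_cases i <;> fin_cases j
  · exact absurd rfl hij
  · exact hne
  · rwa [← hsymm.apply]
  · exact absurd rfl hij

theorem exists_inS_graphJoin_pathGraph_top (k : ℕ) :
    ∃ A, inS (graphJoin (SimpleGraph.pathGraph (3 * (k + 2) - 2)) (⊤ : SimpleGraph (Fin 2))) A ∧
      ∀ μ ∈ specMultiset A, ∃ i : Fin (k + 2), μ = (3 * i : ℕ) := by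
  let lam : Fin (k + 2) → ℝ := fun i => (3 * i : ℕ)
  let θ : Fin 2 → Fin (k + 1) → ℝ := fun s j => (3 * j + s + 1 : ℕ)
  have hinj : Function.Injective (Sum.elim lam fun p : Fin 2 × Fin (k + 1) => θ p.1 p.2) := by
    rintro (i | ⟨s, j⟩) (i' | ⟨s', j'⟩) h <;>
      simp only [Sum.elim_inl, Sum.elim_inr, lam, θ, Nat.cast_inj, Sum.inl.injEq, Sum.inr.injEq,
        Prod.mk.injEq, Fin.ext_iff, reduceCtorEq] at h ⊢ <;> omega
  have hsum : ∑ j, θ 0 j < ∑ j, θ 1 j :=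
    Finset.sum_lt_sum_of_nonempty Finset.univ_nonempty fun j _ => by simp [θ]
  obtain ⟨Q, hQ, hH⟩ := exists_orthogonal_inS_top
    (c := fun s => ∑ i, lam i - ∑ j, θ s j) (sub_lt_sub_left hsum _).ne'
  refine exists_inS_graphJoin_pathGraph_forall_mem_specMultiset
    (fun s j => ?_) (fun s j => ?_) hinj ?_ hQ hH
  · simp only [θ, Fin.val_castSucc, Nat.cast_lt]
    omega
  · simp only [θ, Fin.val_succ, Nat.cast_lt]
    omega
  · simp only [Fintype.card_sum, Fintype.card_prod, Fintype.card_fin]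
    omega

/-- Remark 3.14: for `m = k + 2 ≥ 2`, every eigenvalue of every matrix in
`S(P_{3m−2} ∨ K₂)` has multiplicity at most `3`, and `q(P_{3m−2} ∨ K₂) = m`. -/
theorem statement19 (k : ℕ) :
    (∀ A : Matrix (Fin (3 * (k + 2) - 2) ⊕ Fin 2) (Fin (3 * (k + 2) - 2) ⊕ Fin 2) ℝ,
      inS (graphJoin (SimpleGraph.pathGraph (3 * (k + 2) - 2))
        (⊤ : SimpleGraph (Fin 2))) A →
      ∀ μ : ℝ, Multiset.count μ (specMultiset A) ≤ 3) ∧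
    qGraph (graphJoin (SimpleGraph.pathGraph (3 * (k + 2) - 2))
      (⊤ : SimpleGraph (Fin 2))) = k + 2 := by
  have : NeZero (3 * (k + 2) - 2) := ⟨by omega⟩
  have hmult := fun A hA => count_specMultiset_le_of_inS_graphJoin_pathGraph (A := A)
    (H := (⊤ : SimpleGraph (Fin 2))) (N := 3 * (k + 2) - 2) hA
  have hlower := fun A hA => card_le_mul_qMat (A := A) hA.1 (hmult A hA)
  obtain ⟨A, hA, hspec⟩ := exists_inS_graphJoin_pathGraph_top k
  have hupper : qMat A ≤ k + 2 := by simpa using qMat_le_card _ hspec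
  simp only [Fintype.card_sum, Fintype.card_fin] at hmult hlower
  refine ⟨hmult, IsLeast.csInf_eq ⟨⟨A, hA, ?_⟩, ?_⟩⟩
  · have := hlower A hA
    omega
  · rintro _ ⟨A', hA', rfl⟩
    have := hlower A' hA'
    omega
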